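/- arXiv:2202.11747 — 5 statements merged into one kernel-verified Lean document; each statement's English description precedes it below -/
import Mathlib

section
/- Let s ≥ 1 be an integer and f : ℝ → ℝ be s-times continuously differentiable with f^{(j)} bounded on ℝ for every 0 ≤ j ≤ s, and with f^{(s)} uniformly continuous on ℝ. Let k : ℝ → ℝ be integrable with ∫_ℝ k(z) dz = 1, ∫_ℝ z^j k(z) dz = 0 for j = 1, …, s, and ∫_ℝ |z|^s |k(z)| dz < ∞. Then lim_{h → 0⁺} h^{−s} · sup_{u ∈ ℝ} | ∫_ℝ k(z) f(u + hz) dz − f(u) | = 0; that is, the kernel-smoothing bias of f is uniformly o(h^s). -/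
open MeasureTheory Set

lemma taylor_aux (s : ℕ) (hs : 1 ≤ s) (f : ℝ → ℝ) (hf : ContDiff ℝ s f) (u t : ℝ) :
    ∃ c, |c - u| ≤ |t| ∧
      f (u + t) - ∑ j ∈ Finset.range (s + 1), iteratedDeriv j f u / (j.factorial : ℝ) * t ^ j =
        (iteratedDeriv s f c - iteratedDeriv s f u) / (s.factorial : ℝ) * t ^ s := by
  obtain ⟨n, rfl⟩ : ∃ n, s = n + 1 := ⟨s - 1, by omega⟩
  by_cases ht : t = 0
  · subst ht
    refine ⟨u, by simp, ?_⟩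
    rw [Finset.sum_range_succ']
    simp
  have hx : u ≠ u + t := by simpa using ht
  obtain ⟨c, hc, h⟩ := taylor_mean_remainder_lagrange_iteratedDeriv (n := n) hx
    (by exact_mod_cast hf.contDiffOn)
  refine ⟨c, ?_, ?_⟩
  · have hc' := uIoo_subset_uIcc_self hc
    have := abs_sub_left_of_mem_uIcc hc'
    simpa using this
  · rw [taylor_within_apply] at h
    have e : ∀ j ∈ Finset.range (n + 1),
        ((j.factorial : ℝ)⁻¹ * (u + t - u) ^ j) • iteratedDerivWithin j f (uIcc u (u + t)) u
          = iteratedDeriv j f u / (j.factorial : ℝ) * t ^ j := by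
      intro j hj
      rw [iteratedDerivWithin_eq_iteratedDeriv (uniqueDiffOn_uIcc hx) _ left_mem_uIcc]
      · simp only [add_sub_cancel_left, smul_eq_mul]
        ring
      · refine (hf.of_le ?_).contDiffAt
        have := Finset.mem_range.1 hj
        exact_mod_cast this.le
    rw [Finset.sum_congr rfl e, add_sub_cancel_left] at h
    rw [Finset.sum_range_succ, ← sub_sub, h]
    ring

/-- Under vanishing kernel moments up to order s and uniform continuity of the
s-th derivative of f (with f^{(j)} bounded for j ≤ s), the kernel-smoothing bias
∫ k(z) f(u+hz) dz − f(u) is o(h^s) uniformly in u ∈ ℝ as h → 0⁺. -/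
theorem stmt_2 (s : ℕ) (hs : 1 ≤ s) (f k : ℝ → ℝ)
    (hf : ContDiff ℝ s f)
    (hfb : ∀ j ≤ s, ∃ M : ℝ, ∀ x, |iteratedDeriv j f x| ≤ M)
    (hfu : UniformContinuous (iteratedDeriv s f))
    (hk : Integrable k)
    (hk1 : (∫ z, k z) = 1)
    (hkmom : ∀ j, 1 ≤ j → j ≤ s → (∫ z, z ^ j * k z) = 0)
    (hks : Integrable (fun z => |z| ^ s * |k z|)) :
    ∀ ε > 0, ∃ δ > 0, ∀ h : ℝ, 0 < h → h < δ → ∀ u : ℝ,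
      |(∫ z, k z * f (u + h * z)) - f u| ≤ ε * h ^ s := by
  classical
  intro ε hε
  obtain ⟨M, hM⟩ := hfb s le_rfl
  have hM0 : 0 ≤ M := (abs_nonneg _).trans (hM 0)
  set g : ℝ → ℝ := fun z => |z| ^ s * |k z| with hg
  have hg0 : ∀ z, 0 ≤ g z := fun z => by positivity
  set I := ∫ z, g z with hI
  have hI0 : 0 ≤ I := integral_nonneg hg0
  have hmeas : ∀ n : ℕ, MeasurableSet {z : ℝ | (n : ℝ) ≤ |z|} := fun n =>
    measurableSet_le measurable_const measurable_id.abs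
  have hGi : ∀ n : ℕ, Integrable (indicator {z : ℝ | (n : ℝ) ≤ |z|} g) := fun n =>
    hks.indicator (hmeas n)
  have htail : Filter.Tendsto (fun n : ℕ => ∫ z, indicator {z : ℝ | (n : ℝ) ≤ |z|} g z)
      Filter.atTop (nhds (∫ _ : ℝ, (0 : ℝ))) := by
    refine tendsto_integral_of_dominated_convergence g
      (fun n => (hGi n).aestronglyMeasurable) hks ?_ ?_
    · intro n
      refine Filter.Eventually.of_forall fun z => ?_
      refine (norm_indicator_le_norm_self _ _).trans ?_
      rw [Real.norm_of_nonneg (hg0 z)]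
    · refine Filter.Eventually.of_forall fun z => ?_
      refine tendsto_const_nhds.congr' ?_
      obtain ⟨N, hN⟩ := exists_nat_gt |z|
      filter_upwards [Filter.eventually_ge_atTop N] with n hn
      rw [indicator_of_notMem]
      simp only [mem_ofPred_eq, not_le]
      exact hN.trans_le (by exact_mod_cast hn)
  rw [integral_zero] at htail
  obtain ⟨n, hn⟩ := (htail.eventually (gt_mem_nhds
    (show (0 : ℝ) < ε / (2 * (2 * M + 1)) by positivity))).exists
  set J := ∫ z, indicator {z : ℝ | (n : ℝ) ≤ |z|} g z with hJ
  have hε1 : 0 < ε / (2 * (I + 1)) := by positivity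
  obtain ⟨η, hη, hu⟩ := Metric.uniformContinuous_iff.1 hfu _ hε1
  refine ⟨η / (n + 1), by positivity, fun h h0 hδ u => ?_⟩
  have hfac : (1 : ℝ) ≤ s.factorial := by exact_mod_cast Nat.succ_le_of_lt s.factorial_pos
  -- moments integrable
  have hmi : ∀ j ≤ s, Integrable (fun z => z ^ j * k z) := by
    intro j hj
    refine (hk.abs.add hks).mono'
      ((continuous_pow j).aestronglyMeasurable.mul hk.aestronglyMeasurable) ?_
    refine Filter.Eventually.of_forall fun z => ?_
    have h1 : |z| ^ j ≤ 1 + |z| ^ s := by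
      rcases le_total |z| 1 with hz | hz
      · have := pow_le_one₀ (n := j) (abs_nonneg z) hz
        have : 0 ≤ |z| ^ s := by positivity
        linarith
      · have := pow_le_pow_right₀ hz hj
        linarith
    have h2 := mul_le_mul_of_nonneg_right h1 (abs_nonneg (k z))
    simp only [Pi.add_apply, Real.norm_eq_abs, abs_mul, abs_pow]
    simp only [hg]
    linarith
  set P : ℝ → ℝ := fun z => ∑ j ∈ Finset.range (s + 1),
    (iteratedDeriv j f u / (j.factorial : ℝ) * h ^ j) * (z ^ j * k z) with hP
  have hPi : Integrable P := integrable_finsetSum _ fun j hj =>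
    (hmi j (by have := Finset.mem_range.1 hj; omega)).const_mul _
  have hPint : ∫ z, P z = f u := by
    simp only [hP]
    rw [integral_finsetSum _ fun j hj =>
      (hmi j (by have := Finset.mem_range.1 hj; omega)).const_mul _, Finset.sum_range_succ']
    rw [Finset.sum_eq_zero]
    · simp [integral_const_mul, hk1]
    · intro j hj
      have := Finset.mem_range.1 hj
      rw [integral_const_mul, hkmom (j + 1) (by omega) (by omega), mul_zero]
  have hFi : Integrable (fun z => k z * f (u + h * z)) := by
    obtain ⟨M0, hM0'⟩ := hfb 0 (Nat.zero_le _)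
    refine hk.mul_bdd (c := M0) ?_ ?_
    · have := hf.continuous
      exact Continuous.aestronglyMeasurable (by fun_prop)
    · exact Filter.Eventually.of_forall fun z => by simpa using hM0' (u + h * z)
  rw [← hPint, ← integral_sub hFi hPi]
  have hbound : ∀ z, ‖k z * f (u + h * z) - P z‖ ≤
      h ^ s * (ε / (2 * (I + 1)) * g z + 2 * M * indicator {z : ℝ | (n : ℝ) ≤ |z|} g z) := by
    intro z
    obtain ⟨c, hc, he⟩ := taylor_aux s hs f hf u (h * z)
    have e1 : k z * f (u + h * z) - P z = k z *
        ((iteratedDeriv s f c - iteratedDeriv s f u) / (s.factorial : ℝ) * (h * z) ^ s) := by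
      rw [← he, mul_sub, Finset.mul_sum]
      congr 1
      refine Finset.sum_congr rfl fun j _ => ?_
      ring
    set D := iteratedDeriv s f c - iteratedDeriv s f u with hD
    have e2 : ‖k z * f (u + h * z) - P z‖ = |D| / s.factorial * (h ^ s * g z) := by
      rw [e1, Real.norm_eq_abs, abs_mul, abs_mul, abs_div, abs_pow, abs_mul, abs_of_pos h0,
        Nat.abs_cast, mul_pow]
      simp only [hg]
      ring
    have e3 : |D| / s.factorial ≤ |D| := div_le_self (abs_nonneg _) hfac
    have hhg : 0 ≤ h ^ s * g z := mul_nonneg (by positivity) (hg0 z)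
    rw [e2]
    refine (mul_le_mul_of_nonneg_right e3 hhg).trans ?_
    by_cases hz : (n : ℝ) ≤ |z|
    · rw [indicator_of_mem (show z ∈ {z : ℝ | (n : ℝ) ≤ |z|} from hz)]
      have hD2 : |D| ≤ 2 * M := by
        have := abs_sub (iteratedDeriv s f c) (iteratedDeriv s f u)
        linarith [hM c, hM u]
      have := mul_le_mul_of_nonneg_right hD2 hhg
      have := mul_nonneg hε1.le hhg
      nlinarith
    · rw [indicator_of_notMem (show z ∉ {z : ℝ | (n : ℝ) ≤ |z|} from hz)]
      have hlt : |c - u| < η := by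
        refine hc.trans_lt ?_
        rw [abs_mul, abs_of_pos h0]
        rw [lt_div_iff₀ (by positivity)] at hδ
        push Not at hz
        nlinarith
      have hD2 : |D| ≤ ε / (2 * (I + 1)) := (hu (show dist c u < η from hlt)).le
      have := mul_le_mul_of_nonneg_right hD2 hhg
      linarith
  have hint : Integrable (fun z =>
      h ^ s * (ε / (2 * (I + 1)) * g z + 2 * M * indicator {z : ℝ | (n : ℝ) ≤ |z|} g z)) :=
    ((hks.const_mul _).add ((hGi n).const_mul _)).const_mul _
  have hfin := norm_integral_le_of_norm_le hint (Filter.Eventually.of_forall hbound)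
  rw [integral_const_mul, integral_add (hks.const_mul _) ((hGi n).const_mul _),
    integral_const_mul, integral_const_mul, ← hI, ← hJ] at hfin
  rw [← Real.norm_eq_abs]
  refine hfin.trans ?_
  rw [mul_comm ε]
  refine mul_le_mul_of_nonneg_left ?_ (by positivity)
  have a1 : ε / (2 * (I + 1)) * I ≤ ε / 2 := by
    rw [div_mul_eq_mul_div, div_le_div_iff₀ (by positivity) (by positivity)]
    nlinarith
  have a2 : 2 * M * J ≤ ε / 2 := by
    have h1 : 2 * M * J ≤ 2 * M * (ε / (2 * (2 * M + 1))) :=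
      mul_le_mul_of_nonneg_left hn.le (by positivity)
    refine h1.trans ?_
    rw [mul_div_assoc', div_le_div_iff₀ (by positivity) (by positivity)]
    nlinarith
  linarith
end

section
/- Let s ≥ 1 be an integer, f : ℝ → ℝ a probability density (nonnegative, integrable, ∫_ℝ f = 1) that is s-times continuously differentiable with f^{(j)} bounded for every 0 ≤ j ≤ s, and let F(a) = ∫_{−∞}^a f(y) dy be its cumulative distribution function. Let k : ℝ → ℝ be integrable with ∫_ℝ k(z) dz = 1, ∫_ℝ z^j k(z) dz = 0 for j = 1, …, s, and ∫_ℝ |z|^{s+1} |k(z)| dz < ∞, and set K̄(u) = ∫_{−∞}^u k(v) dv. Then for every a ∈ ℝ and h > 0, | ∫_ℝ K̄((a−y)/h) f(y) dy − F(a) | ≤ (sup_{u∈ℝ} |f^{(s)}(u)| / (s+1)!) · (∫_ℝ |z|^{s+1} |k(z)| dz) · h^{s+1}. -/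
open MeasureTheory Set

lemma aux_taylor (s : ℕ) (F : ℝ → ℝ) (M : ℝ) (hF : ContDiff ℝ (s + 1 : ℕ) F)
    (hM : ∀ u, |iteratedDeriv (s + 1) F u| ≤ M) (a x : ℝ) :
    |F x - ∑ j ∈ Finset.range (s + 1), iteratedDeriv j F a / (Nat.factorial j) * (x - a) ^ j|
      ≤ M / (Nat.factorial (s + 1)) * |x - a| ^ (s + 1) := by
  have hM0 : 0 ≤ M := (abs_nonneg _).trans (hM a)
  by_cases hx : a = x
  · subst hx
    rw [Finset.sum_range_succ']
    simp
  · obtain ⟨y, -, hy⟩ := taylor_mean_remainder_lagrange_iteratedDeriv (n := s) hx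
      (by exact_mod_cast hF.contDiffOn)
    have e : taylorWithinEval F s (uIcc a x) a x =
        ∑ j ∈ Finset.range (s + 1), iteratedDeriv j F a / (Nat.factorial j) * (x - a) ^ j := by
      rw [taylor_within_apply]
      refine Finset.sum_congr rfl fun j hj => ?_
      rw [iteratedDerivWithin_eq_iteratedDeriv (uniqueDiffOn_uIcc hx) _ left_mem_uIcc]
      · simp only [smul_eq_mul]; ring
      · refine (hF.of_le ?_).contDiffAt
        have := Finset.mem_range.1 hj
        exact_mod_cast this.le
    rw [← e, hy, abs_div, abs_mul, abs_pow, Nat.abs_cast, mul_div_right_comm]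
    gcongr
    exact hM y

lemma aux_swap (f k : ℝ → ℝ) (hfi : Integrable f) (hk : Integrable k) (a h : ℝ) (hh : 0 < h) :
    (∫ y, (∫ v in Set.Iic ((a - y) / h), k v) * f y) =
      ∫ v, (∫ y in Set.Iic (a - h * v), f y) * k v := by
  have hI : Integrable ({p : ℝ × ℝ | p.2 ≤ (a - p.1) / h}.indicator
      (fun p : ℝ × ℝ => f p.1 * k p.2)) (volume.prod volume) := by
    refine (hfi.mul_prod hk).indicator ?_
    exact measurableSet_le (by fun_prop) (by fun_prop)
  have := integral_integral_swap (f := fun y v => ({p : ℝ × ℝ | p.2 ≤ (a - p.1) / h}.indicator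
      (fun p : ℝ × ℝ => f p.1 * k p.2)) (y, v)) hI
  convert this using 1
  · refine integral_congr_ae (.of_forall fun y => ?_)
    simp only
    rw [← integral_indicator measurableSet_Iic, ← integral_mul_const]
    refine integral_congr_ae (.of_forall fun v => ?_)
    simp only [Set.indicator, mem_Iic, mem_setOf_eq]
    split_ifs <;> ring
  · refine integral_congr_ae (.of_forall fun v => ?_)
    simp only
    rw [← integral_indicator measurableSet_Iic, ← integral_mul_const]
    refine integral_congr_ae (.of_forall fun y => ?_)
    have : y ≤ a - h * v ↔ v ≤ (a - y) / h := by
      rw [le_div_iff₀ hh]; constructor <;> intro <;> linarith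
    simp only [Set.indicator, mem_Iic, mem_setOf_eq, this]
    split_ifs <;> ring

lemma aux_deriv (f F : ℝ → ℝ) (hfi : Integrable f) (hf : Continuous f)
    (hF : ∀ a, F a = ∫ y in Set.Iic a, f y) (x : ℝ) : HasDerivAt F (f x) x := by
  have e : F = fun x => F 0 + ∫ y in (0:ℝ)..x, f y := by
    ext x
    rw [hF, hF, ← intervalIntegral.integral_Iic_sub_Iic hfi.integrableOn hfi.integrableOn]
    ring
  rw [e]
  exact (intervalIntegral.integral_hasDerivAt_right (hf.intervalIntegrable _ _)
    (hf.stronglyMeasurableAtFilter _ _) hf.continuousAt).const_add _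

/-- O(h^{s+1}) bias bound for the kernel-smoothed CDF: with f a C^s probability
density with bounded derivatives, F its CDF, k a kernel with unit mass, vanishing
moments of orders 1,…,s and finite (s+1)-th absolute moment, and K̄ the integrated
kernel, | ∫ K̄((a−y)/h) f(y) dy − F(a) | ≤ (sup|f^{(s)}|/(s+1)!) ∫|z|^{s+1}|k| · h^{s+1}. -/
theorem stmt_3 (s : ℕ) (hs : 1 ≤ s) (f k : ℝ → ℝ)
    (hf0 : ∀ y, 0 ≤ f y) (hfi : Integrable f) (hf1 : (∫ y, f y) = 1)
    (hf : ContDiff ℝ s f)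
    (hfb : ∀ j ≤ s, ∃ M : ℝ, ∀ x, |iteratedDeriv j f x| ≤ M)
    (F : ℝ → ℝ) (hF : ∀ a, F a = ∫ y in Set.Iic a, f y)
    (hk : Integrable k)
    (hk1 : (∫ z, k z) = 1)
    (hkmom : ∀ j, 1 ≤ j → j ≤ s → (∫ z, z ^ j * k z) = 0)
    (hks1 : Integrable (fun z => |z| ^ (s + 1) * |k z|))
    (Kbar : ℝ → ℝ) (hKbar : ∀ u, Kbar u = ∫ v in Set.Iic u, k v) :
    ∀ (a h : ℝ), 0 < h →
      |(∫ y, Kbar ((a - y) / h) * f y) - F a| ≤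
        ((⨆ u : ℝ, |iteratedDeriv s f u|) / (Nat.factorial (s + 1))) *
          (∫ z, |z| ^ (s + 1) * |k z|) * h ^ (s + 1) := by
  intro a h hh
  have hD := aux_deriv f F hfi hf.continuous hF
  have hdF : deriv F = f := funext fun x => (hD x).deriv
  have hFC : ContDiff ℝ (s + 1 : ℕ) F := by
    push_cast
    rw [contDiff_succ_iff_deriv]
    refine ⟨fun x => (hD x).differentiableAt, by simp, ?_⟩
    rwa [hdF]
  set M := ⨆ u : ℝ, |iteratedDeriv s f u| with hMdef
  have hM : ∀ u, |iteratedDeriv (s + 1) F u| ≤ M := by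
    intro u
    rw [iteratedDeriv_succ', hdF]
    obtain ⟨B, hB⟩ := hfb s le_rfl
    exact le_ciSup (f := fun u => |iteratedDeriv s f u|) ⟨B, by rintro _ ⟨x, rfl⟩; exact hB x⟩ u
  have hT := aux_taylor s F M hFC hM a
  have hmom : ∀ j ≤ s, Integrable (fun z => z ^ j * k z) := by
    intro j hj
    refine (hk.abs.add hks1).mono'
      ((continuous_pow j).aestronglyMeasurable.mul hk.aestronglyMeasurable) (.of_forall fun z => ?_)
    simp only [Pi.add_apply, norm_mul, norm_pow, Real.norm_eq_abs]
    have : |z| ^ j ≤ 1 + |z| ^ (s + 1) := by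
      rcases le_total |z| 1 with hz | hz
      · have := pow_le_one₀ (n := j) (abs_nonneg z) hz
        have := pow_nonneg (abs_nonneg z) (s + 1)
        linarith
      · have := pow_le_pow_right₀ hz (show j ≤ s + 1 by omega)
        linarith
    nlinarith [abs_nonneg (k z)]
  set c : ℕ → ℝ := fun j => iteratedDeriv j F a / (Nat.factorial j) * (-h) ^ j with hc
  have hPi : ∀ j ∈ Finset.range (s + 1), Integrable (fun z => c j * (z ^ j * k z)) :=
    fun j hj => (hmom j (by have := Finset.mem_range.1 hj; omega)).const_mul _
  have hP : ∫ z, ∑ j ∈ Finset.range (s + 1), c j * (z ^ j * k z) = F a := by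
    rw [integral_finset_sum _ hPi, Finset.sum_range_succ', Finset.sum_eq_zero]
    · simp [hc, integral_const_mul, hk1]
    · intro j hj
      rw [integral_const_mul, hkmom _ (by omega) (by have := Finset.mem_range.1 hj; omega), mul_zero]
  have hPint := integrable_finset_sum _ hPi
  have hR : ∀ z, ‖F (a - h * z) * k z - ∑ j ∈ Finset.range (s + 1), c j * (z ^ j * k z)‖ ≤
      M / (Nat.factorial (s + 1)) * h ^ (s + 1) * (|z| ^ (s + 1) * |k z|) := by
    intro z
    have h1 := hT (a - h * z)
    have h2 : F (a - h * z) * k z - ∑ j ∈ Finset.range (s + 1), c j * (z ^ j * k z) =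
        (F (a - h * z) - ∑ j ∈ Finset.range (s + 1),
          iteratedDeriv j F a / (Nat.factorial j) * (a - h * z - a) ^ j) * k z := by
      rw [sub_mul, Finset.sum_mul]
      congr 1
      refine Finset.sum_congr rfl fun j _ => ?_
      rw [show a - h * z - a = (-h) * z by ring, mul_pow, hc]
      ring
    rw [h2, norm_mul, Real.norm_eq_abs, Real.norm_eq_abs]
    rw [show |a - h * z - a| = h * |z| by
      rw [show a - h * z - a = -(h * z) by ring, abs_neg, abs_mul, abs_of_pos hh], mul_pow] at h1
    calc _ ≤ _ := mul_le_mul_of_nonneg_right h1 (abs_nonneg (k z))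
      _ = _ := by ring
  have hRb := hks1.const_mul (M / (Nat.factorial (s + 1)) * h ^ (s + 1))
  have hFm : AEStronglyMeasurable (fun z => F (a - h * z) * k z) volume := by
    refine AEStronglyMeasurable.mul ?_ hk.aestronglyMeasurable
    exact (hFC.continuous.comp (by fun_prop : Continuous fun z : ℝ => a - h * z)).aestronglyMeasurable
  have hRi := hRb.mono' (hFm.sub hPint.aestronglyMeasurable) (.of_forall hR)
  have hFi : Integrable (fun z => F (a - h * z) * k z) := by
    refine (hRi.add hPint).congr (.of_forall fun z => ?_)
    simp
  have e1 : (∫ y, Kbar ((a - y) / h) * f y) = ∫ z, F (a - h * z) * k z := by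
    simp only [hKbar, hF]
    exact aux_swap f k hfi hk a h hh
  rw [e1]
  nth_rewrite 1 [← hP]
  rw [← integral_sub hFi hPint]
  have := norm_integral_le_of_norm_le hRb (.of_forall hR)
  rw [integral_const_mul, Real.norm_eq_abs] at this
  exact this.trans_eq (by ring)
end

section
/- Let k : ℝ → ℝ be integrable and f : ℝ → ℝ a probability density with cumulative distribution function F(a) = ∫_{−∞}^a f(y) dy. Set K̄(u) = ∫_{−∞}^u k(v) dv and K*(z) = 2 k(z) K̄(z). Then for every a ∈ ℝ and h > 0, ∫_ℝ K̄((a−y)/h)² f(y) dy = ∫_ℝ K*(z) F(a − hz) dz, and both integrals are absolutely convergent. -/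
open MeasureTheory Set

lemma aux_swap_s5 (g m : ℝ → ℝ) (hg : Integrable g) (hm : Integrable m) (S : Set (ℝ × ℝ))
    (hS : MeasurableSet S) :
    (∫ z, g z * ∫ v in {v | (z, v) ∈ S}, m v) = ∫ v, m v * ∫ z in {z | (z, v) ∈ S}, g z := by
  have h1 : Integrable (Function.uncurry fun z v => S.indicator (fun p : ℝ × ℝ => g p.1 * m p.2) (z, v))
      ((volume : Measure ℝ).prod volume) := (hg.mul_prod hm).indicator hS
  have h2 := integral_integral_swap h1
  have e1 : ∀ z, (∫ v, S.indicator (fun p : ℝ × ℝ => g p.1 * m p.2) (z, v))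
      = g z * ∫ v in {v | (z, v) ∈ S}, m v := by
    intro z
    have hz : MeasurableSet {v | (z, v) ∈ S} := measurable_prodMk_left hS
    rw [← integral_indicator hz, ← integral_const_mul]
    congr 1; ext v
    by_cases h : (z, v) ∈ S <;> simp [indicator, h]
  have e2 : ∀ v, (∫ z, S.indicator (fun p : ℝ × ℝ => g p.1 * m p.2) (z, v))
      = m v * ∫ z in {z | (z, v) ∈ S}, g z := by
    intro v
    have hz : MeasurableSet {z | (z, v) ∈ S} := measurable_prodMk_right hS
    rw [← integral_indicator hz, ← integral_const_mul]
    congr 1; ext z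
    by_cases h : (z, v) ∈ S <;> simp [indicator, h, mul_comm]
  simpa only [e1, e2] using h2

lemma aux_cont (g : ℝ → ℝ) (hg : Integrable g) : Continuous fun u => ∫ v in Iic u, g v := by
  have : (fun u => ∫ v in Iic u, g v) = fun u => (∫ v in Iic 0, g v) + ∫ v in (0:ℝ)..u, g v := by
    ext u
    rw [← intervalIntegral.integral_Iic_sub_Iic hg.integrableOn hg.integrableOn]; ring
  rw [this]
  exact continuous_const.add
    (intervalIntegral.continuous_primitive (fun _ _ => hg.intervalIntegrable) 0)

lemma aux_bd (g : ℝ → ℝ) (hg : Integrable g) (s : Set ℝ) : ‖∫ v in s, g v‖ ≤ ∫ v, ‖g v‖ :=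
  (norm_integral_le_integral_norm _).trans
    (setIntegral_le_integral hg.norm (Filter.Eventually.of_forall fun _ => norm_nonneg _))

lemma aux_sq (g : ℝ → ℝ) (hg : Integrable g) :
    (∫ z, g z) ^ 2 = 2 * ∫ z, g z * ∫ v in Iic z, g v := by
  have h := aux_swap_s5 g g hg hg {p | p.2 ≤ p.1} (measurableSet_le measurable_snd measurable_fst)
  have hi : Integrable fun z => g z * ∫ v in Iic z, g v := by
    refine hg.mul_bdd (c := ∫ v, ‖g v‖) (aux_cont g hg).aestronglyMeasurable ?_
    exact Filter.Eventually.of_forall fun _ => aux_bd g hg _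
  have e : ∀ v, (∫ z in {z | (z, v) ∈ {p : ℝ × ℝ | p.2 ≤ p.1}}, g z)
      = (∫ z, g z) - ∫ z in Iic v, g z := by
    intro v
    have : {z | (z, v) ∈ {p : ℝ × ℝ | p.2 ≤ p.1}} = Ici v := rfl
    rw [this, integral_Ici_eq_integral_Ioi, ← compl_Iic,
      setIntegral_compl measurableSet_Iic hg]
  simp only [e, mul_sub] at h
  rw [integral_sub (hg.mul_const _) hi, integral_mul_const] at h
  have h' : (∫ z, g z * ∫ v in Iic z, g v) = (∫ z, g z) * (∫ z, g z) -
    ∫ z, g z * ∫ v in Iic z, g v := h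
  linarith [sq (∫ z, g z)]

lemma aux_sq_Iic (k : ℝ → ℝ) (hk : Integrable k) (u : ℝ) :
    (∫ z in Iic u, k z) ^ 2 = ∫ z in Iic u, 2 * k z * ∫ v in Iic z, k v := by
  have h := aux_sq _ (hk.indicator (measurableSet_Iic (a := u)))
  rw [integral_indicator measurableSet_Iic] at h
  rw [h, ← integral_const_mul, ← integral_indicator measurableSet_Iic]
  congr 1; ext z
  by_cases hz : z ≤ u
  · have : (∫ v in Iic z, (Iic u).indicator k v) = ∫ v in Iic z, k v := by
      refine setIntegral_congr_fun measurableSet_Iic fun v hv => ?_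
      have : v ≤ u := le_trans hv hz
      simp [indicator, this]
    rw [this]; simp [indicator, hz, mul_assoc]
  · simp [indicator, hz]

theorem stmt_5 (k f : ℝ → ℝ) (hk : Integrable k)
    (hf0 : ∀ y, 0 ≤ f y) (hfi : Integrable f) (hf1 : (∫ y, f y) = 1)
    (F : ℝ → ℝ) (hF : ∀ a, F a = ∫ y in Set.Iic a, f y)
    (Kbar : ℝ → ℝ) (hKbar : ∀ u, Kbar u = ∫ v in Set.Iic u, k v)
    (Kstar : ℝ → ℝ) (hKstar : ∀ z, Kstar z = 2 * k z * Kbar z) :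
    ∀ (a h : ℝ), 0 < h →
      Integrable (fun y => (Kbar ((a - y) / h)) ^ 2 * f y) ∧
      Integrable (fun z => Kstar z * F (a - h * z)) ∧
      (∫ y, (Kbar ((a - y) / h)) ^ 2 * f y) = ∫ z, Kstar z * F (a - h * z) := by
  intro a h hh
  have cK : Continuous Kbar := by
    rw [funext hKbar]; exact aux_cont k hk
  have cF : Continuous F := by
    rw [funext hF]; exact aux_cont f hfi
  have bK : ∀ u, ‖Kbar u‖ ≤ ∫ v, ‖k v‖ := fun u => by rw [hKbar]; exact aux_bd k hk _
  have bF : ∀ u, ‖F u‖ ≤ ∫ v, ‖f v‖ := fun u => by rw [hF]; exact aux_bd f hfi _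
  have iS : Integrable Kstar := by
    rw [funext hKstar]
    exact (hk.const_mul 2).mul_bdd cK.aestronglyMeasurable (Filter.Eventually.of_forall bK)
  refine ⟨?_, ?_, ?_⟩
  · refine hfi.bdd_mul (c := (∫ v, ‖k v‖) ^ 2)
      (Continuous.aestronglyMeasurable (by fun_prop)) (Filter.Eventually.of_forall fun y => ?_)
    rw [norm_pow]
    exact pow_le_pow_left₀ (norm_nonneg _) (bK _) 2
  · exact iS.mul_bdd (Continuous.aestronglyMeasurable (by fun_prop))
      (Filter.Eventually.of_forall fun y => bF _)
  · have hs := aux_swap_s5 Kstar f iS hfi {p | p.2 ≤ a - h * p.1}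
      (measurableSet_le measurable_snd (by fun_prop))
    have e1 : ∀ z, F (a - h * z) = ∫ v in {v | (z, v) ∈ {p : ℝ × ℝ | p.2 ≤ a - h * p.1}}, f v :=
      fun z => hF _
    have e2 : ∀ y, (Kbar ((a - y) / h)) ^ 2
        = ∫ z in {z | (z, y) ∈ {p : ℝ × ℝ | p.2 ≤ a - h * p.1}}, Kstar z := by
      intro y
      have : {z | (z, y) ∈ {p : ℝ × ℝ | p.2 ≤ a - h * p.1}} = Iic ((a - y) / h) := by
        ext z
        simp only [mem_setOf_eq, mem_Iic, le_div_iff₀ hh]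
        constructor <;> intro _ <;> linarith
      rw [this, hKbar, aux_sq_Iic k hk]
      simp only [hKstar, hKbar]
    simp only [e1, e2]
    rw [hs]
    simp only [mul_comm]
end

section
/- Let k : ℝ → ℝ be an even integrable function with ∫_ℝ k(z) dz = 1 and ∫_ℝ |z k(z)| dz < ∞, and set K̄(u) = ∫_{−∞}^u k(v) dv and K*(z) = 2 k(z) K̄(z). Then ∫_ℝ z K*(z) dz = 2 ∫_0^∞ K̄(z) (1 − K̄(z)) dz, and both integrals are absolutely convergent. -/
open MeasureTheory Set

theorem aux_fubini (g : ℝ → ℝ) (hg : Integrable g) (hvg : Integrable (fun v => v * g v)) :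
    IntegrableOn (fun z => ∫ v in Ioi z, g v) (Ioi (0:ℝ)) ∧
    (∫ z in Ioi (0:ℝ), ∫ v in Ioi z, g v) = ∫ v in Ioi (0:ℝ), v * g v := by
  let μ : Measure ℝ := volume.restrict (Ioi (0:ℝ))
  let f : ℝ × ℝ → ℝ := indicator {p : ℝ × ℝ | p.1 < p.2} (fun p => g p.2)
  have hS : MeasurableSet {p : ℝ × ℝ | p.1 < p.2} := measurableSet_lt measurable_fst measurable_snd
  have hfm : AEStronglyMeasurable f (μ.prod μ) := by
    refine AEStronglyMeasurable.indicator ?_ hS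
    exact (hg.aestronglyMeasurable.mono_measure Measure.restrict_le_self).comp_snd
  have hsec : ∀ v : ℝ, (fun z => f (z, v)) = indicator (Iio v) (fun _ => g v) := by
    intro v; ext z; simp [f, indicator]
  have hsec2 : ∀ z : ℝ, (fun v => f (z, v)) = indicator (Ioi z) g := by
    intro v; ext z; simp [f, indicator]
  have hint1 : ∀ v ∈ Ioi (0:ℝ), ∀ c : ℝ, ∫ z, indicator (Iio v) (fun _ => c) z ∂μ = v * c := by
    intro v hv c
    have hv' : (0:ℝ) < v := hv
    rw [integral_indicator measurableSet_Iio, Measure.restrict_restrict measurableSet_Iio,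
      setIntegral_const, inter_comm, Ioi_inter_Iio]
    simp [hv'.le]
  have hf : Integrable f (μ.prod μ) := by
    rw [integrable_prod_iff' hfm]
    constructor
    · refine Filter.Eventually.of_forall fun v => ?_
      rw [hsec, integrable_indicator_iff measurableSet_Iio]
      simp only [IntegrableOn, μ]
      rw [Measure.restrict_restrict measurableSet_Iio, inter_comm, Ioi_inter_Iio]
      exact integrableOn_const (by simp)
    · have h1 : Integrable (fun v => ‖v * g v‖) μ := hvg.norm.mono_measure Measure.restrict_le_self
      refine h1.congr ?_
      filter_upwards [ae_restrict_mem measurableSet_Ioi] with v hv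
      have : (fun z => ‖f (z, v)‖) = indicator (Iio v) (fun _ => ‖g v‖) := by
        ext z
        rw [show f (z, v) = indicator (Iio v) (fun _ => g v) z from congrFun (hsec v) z,
          norm_indicator_eq_indicator_norm]
      rw [this, hint1 v hv, norm_mul, Real.norm_of_nonneg (le_of_lt hv)]
  have hin2 : ∀ z ∈ Ioi (0:ℝ), ∫ v, f (z, v) ∂μ = ∫ v in Ioi z, g v := by
    intro z hz
    rw [hsec2, integral_indicator measurableSet_Ioi, Measure.restrict_restrict measurableSet_Ioi,
      inter_eq_left.2 (Ioi_subset_Ioi (le_of_lt hz))]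
  constructor
  · refine hf.integral_prod_left.congr ?_
    filter_upwards [ae_restrict_mem measurableSet_Ioi] with z hz using hin2 z hz
  · have h := integral_integral_swap (f := fun z v => f (z, v)) hf
    rw [← setIntegral_congr_fun measurableSet_Ioi hin2, h]
    refine setIntegral_congr_fun measurableSet_Ioi fun v hv => ?_
    change ∫ z, f (z, v) ∂μ = v * g v
    rw [hsec, hint1 v hv]

theorem stmt_6 (k : ℝ → ℝ) (hke : ∀ z, k (-z) = k z) (hk : Integrable k)
    (hk1 : (∫ z, k z) = 1)
    (hk2 : Integrable (fun z => |z * k z|))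
    (Kbar : ℝ → ℝ) (hKbar : ∀ u, Kbar u = ∫ v in Set.Iic u, k v)
    (Kstar : ℝ → ℝ) (hKstar : ∀ z, Kstar z = 2 * k z * Kbar z) :
    Integrable (fun z => z * Kstar z) ∧
    IntegrableOn (fun z => Kbar z * (1 - Kbar z)) (Set.Ioi (0:ℝ)) ∧
    (∫ z, z * Kstar z) = 2 * ∫ z in Set.Ioi (0:ℝ), Kbar z * (1 - Kbar z) := by
  have hzk : Integrable (fun z => z * k z) := by
    refine (integrable_norm_iff ?_).1 hk2
    exact continuous_id.aestronglyMeasurable.mul hk.aestronglyMeasurable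
  have hK0 : Kbar = fun u => Kbar 0 + ∫ t in (0:ℝ)..u, k t := by
    ext u
    rw [← intervalIntegral.integral_Iic_sub_Iic hk.integrableOn hk.integrableOn, hKbar, hKbar]
    ring
  have hKc : Continuous Kbar := by
    rw [hK0]
    exact continuous_const.add (intervalIntegral.continuous_primitive (fun a b => hk.intervalIntegrable) 0)
  have hKb : ∀ z, ‖Kbar z‖ ≤ ∫ v, ‖k v‖ := by
    intro z
    rw [hKbar]
    exact (norm_integral_le_integral_norm _).trans
      (setIntegral_le_integral hk.norm (Filter.Eventually.of_forall fun _ => norm_nonneg _))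
  have hKd : ∀ᵐ x, HasDerivAt Kbar (k x) x := by
    filter_upwards [LocallyIntegrable.ae_hasDerivAt_integral hk.locallyIntegrable] with x hx
    rw [hK0]
    exact (hx 0).const_add _
  have hKac : ∀ a b, AbsolutelyContinuousOnInterval Kbar a b := by
    intro a b
    have h1 := (hk.intervalIntegrable (a := a) (b := b)).absolutelyContinuousOnInterval_intervalIntegral
      (c := a) (by simp)
    have h2 : AbsolutelyContinuousOnInterval (fun _ : ℝ => Kbar a) a b :=
      (contDiff_const (n := 1)).contDiffOn.absolutelyContinuousOnInterval
    have h3 : Kbar = (fun _ => Kbar a) + fun x => ∫ v in a..x, k v := by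
      refine funext fun u => ?_
      change Kbar u = Kbar a + ∫ v in a..u, k v
      rw [← intervalIntegral.integral_Iic_sub_Iic hk.integrableOn hk.integrableOn, hKbar, hKbar]
      ring
    rw [h3]
    exact h2.add h1
  have hsym : ∀ z, Kbar (-z) = 1 - Kbar z := by
    intro z
    have h1 := intervalIntegral.integral_Iic_add_Ioi (hk.integrableOn (s := Iic z)) (hk.integrableOn (s := Ioi z))
    have h2 := integral_comp_neg_Iic (-z) k
    simp only [hke, neg_neg] at h2
    rw [hKbar, hKbar, h2]
    linarith
  have hKtop : Filter.Tendsto Kbar Filter.atTop (nhds 1) := by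
    have h := intervalIntegral_tendsto_integral_Ioi (μ := volume) 0 (hk.integrableOn (s := Ioi (0:ℝ))) Filter.tendsto_id
    have h3 := h.const_add (Kbar 0)
    have h1 := intervalIntegral.integral_Iic_add_Ioi (hk.integrableOn (s := Iic 0)) (hk.integrableOn (s := Ioi (0:ℝ)))
    rw [hKbar 0, h1, hk1, ← hKbar 0] at h3
    rw [hK0]
    exact h3
  let g : ℝ → ℝ := fun z => k z * (2 * Kbar z - 1)
  have hbd : ∀ᵐ z, ‖2 * Kbar z - 1‖ ≤ 2 * (∫ v, ‖k v‖) + 1 := by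
    refine Filter.Eventually.of_forall fun z => ?_
    refine (norm_sub_le _ _).trans ?_
    rw [norm_mul]
    have := hKb z
    norm_num at this ⊢
    linarith
  have hm : AEStronglyMeasurable (fun z => 2 * Kbar z - 1) volume :=
    (by fun_prop : Continuous fun z => 2 * Kbar z - 1).aestronglyMeasurable
  have hg : Integrable g := hk.mul_bdd hm hbd
  have hvg : Integrable (fun z => z * g z) := by
    refine (hzk.mul_bdd hm hbd).congr (Filter.Eventually.of_forall fun z => ?_)
    simp only [g]; ring
  have hG : ∀ z, ∫ v in Ioi z, g v = Kbar z * (1 - Kbar z) := by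
    intro z
    have h1 := intervalIntegral_tendsto_integral_Ioi (μ := volume) z (hg.integrableOn (s := Ioi z)) Filter.tendsto_id
    have h2 : ∀ b, ∫ v in z..b, g v = Kbar z * (1 - Kbar z) - Kbar b * (1 - Kbar b) := by
      intro b
      have h3 := (hKac z b).integral_deriv_mul_eq_sub (hKac z b)
      have h4 := (hKac z b).integral_deriv_eq_sub
      have h5 : ∫ v in z..b, deriv Kbar v = ∫ v in z..b, k v := by
        refine intervalIntegral.integral_congr_ae ?_
        filter_upwards [hKd] with x hx _ using hx.deriv
      have h6 : ∫ v in z..b, (deriv Kbar v * Kbar v + Kbar v * deriv Kbar v)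
          = ∫ v in z..b, (g v + k v) := by
        refine intervalIntegral.integral_congr_ae ?_
        filter_upwards [hKd] with x hx _
        rw [hx.deriv]; simp only [g]; ring
      rw [intervalIntegral.integral_add hg.intervalIntegrable hk.intervalIntegrable] at h6
      linarith
    have h3 : Filter.Tendsto (fun b => Kbar z * (1 - Kbar z) - Kbar b * (1 - Kbar b)) Filter.atTop
        (nhds (Kbar z * (1 - Kbar z) - 1 * (1 - 1))) :=
      (hKtop.mul (hKtop.const_sub 1)).const_sub _
    have h4 := tendsto_nhds_unique (h1.congr fun b => h2 b) h3
    rw [h4]; ring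
  obtain ⟨hA, hB⟩ := aux_fubini g hg hvg
  simp only [hG] at hA hB
  have hI : Integrable (fun z => z * Kstar z) := by
    refine ((hzk.mul_bdd hKc.aestronglyMeasurable (Filter.Eventually.of_forall hKb)).const_mul 2).congr
      (Filter.Eventually.of_forall fun z => ?_)
    simp only [hKstar]; ring
  refine ⟨hI, hA, ?_⟩
  rw [hB]
  have e1 : ∫ z, (-z) * Kstar (-z) = ∫ z, z * Kstar z :=
    integral_neg_eq_self (fun z => z * Kstar z) volume
  have e2 : ∫ z, (z * Kstar z + (-z) * Kstar (-z)) = ∫ z, 2 * (z * g z) := by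
    congr 1; ext z
    simp only [hKstar, hke, hsym, g]; ring
  rw [integral_add hI hI.comp_neg, e1, integral_const_mul] at e2
  have e3 : ∫ z, z * g z = 2 * ∫ z in Ioi (0:ℝ), z * g z := by
    rw [← integral_comp_abs (f := fun z => z * g z)]
    congr 1; ext z
    rcases abs_choice z with h | h <;> rw [h]
    simp only [g, hke, hsym]; ring
  linarith
end

section
/- Let τ ∈ (0,1), h > 0, and let k : ℝ → ℝ be continuous and integrable with ∫_ℝ k(v) dv = 1 and ∫_ℝ |v k(v)| dv < ∞. Set K̄(u) = ∫_{−∞}^u k(v) dv, k_h(v) = h^{−1} k(v/h), and define the smoothed check loss ℓ_h(u; τ) = ∫_ℝ ρ_τ(v) k_h(v − u) dv. Then ℓ_h(·; τ) is finite everywhere and twice continuously differentiable on ℝ, with first derivative (d/du) ℓ_h(u; τ) = τ − K̄(−u/h) and second derivative (d²/du²) ℓ_h(u; τ) = h^{−1} k(−u/h). -/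
open MeasureTheory Set

/-- The quantile check function ρ_τ(u) = u(τ − 1{u<0}). -/
noncomputable def checkLoss (τ u : ℝ) : ℝ := u * (τ - if u < 0 then 1 else 0)

theorem checkLoss_lip (τ : ℝ) (hτ : τ ∈ Set.Ioo (0:ℝ) 1) (a b : ℝ) :
    |checkLoss τ a - checkLoss τ b| ≤ |a - b| := by
  obtain ⟨h0, h1⟩ := hτ
  have e : ∀ x, checkLoss τ x = τ * x + max (-x) 0 := by
    intro x
    unfold checkLoss
    split_ifs with hx
    · rw [max_eq_left (by linarith)]; ring
    · rw [max_eq_right (by linarith)]; ring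
  rw [e, e]
  wlog hab : b ≤ a generalizing a b
  · rw [abs_sub_comm, abs_sub_comm a b]
    exact this b a (by linarith)
  rw [abs_of_nonneg (by linarith : 0 ≤ a - b), abs_le]
  have p : 0 ≤ τ * (a - b) := mul_nonneg h0.le (by linarith)
  have q : 0 ≤ (1 - τ) * (a - b) := mul_nonneg (by linarith) (by linarith)
  rcases max_cases (-a) 0 with ⟨h3, _⟩ | ⟨h3, _⟩ <;>
  rcases max_cases (-b) 0 with ⟨h4, _⟩ | ⟨h4, _⟩ <;> rw [h3, h4] <;>
  constructor <;> nlinarith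

theorem checkLoss_cont (τ : ℝ) (hτ : τ ∈ Set.Ioo (0:ℝ) 1) : Continuous (checkLoss τ) := by
  have : LipschitzWith 1 (checkLoss τ) := by
    apply LipschitzWith.of_dist_le_mul
    intro a b
    simpa [Real.dist_eq] using checkLoss_lip τ hτ a b
  exact this.continuous

theorem checkLoss_deriv (τ x : ℝ) (hx : x ≠ 0) :
    HasDerivAt (checkLoss τ) (τ - if x < 0 then 1 else 0) x := by
  rcases lt_or_gt_of_ne hx with h | h
  · rw [if_pos h]
    have : HasDerivAt (fun y : ℝ => y * (τ - 1)) (τ - 1) x := by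
      simpa using (hasDerivAt_id x).mul_const (τ - 1)
    refine this.congr_of_eventuallyEq ?_
    filter_upwards [Iio_mem_nhds h] with y hy
    have hy' : y < 0 := hy
    simp [checkLoss, hy']
  · rw [if_neg (by linarith)]
    have : HasDerivAt (fun y : ℝ => y * (τ - 0)) (τ - 0) x := by
      simpa using (hasDerivAt_id x).mul_const (τ - 0)
    refine this.congr_of_eventuallyEq ?_
    filter_upwards [Ioi_mem_nhds h] with y hy
    have hy' : ¬ y < 0 := not_lt.2 (le_of_lt hy)
    simp [checkLoss, hy']

/-- The convolution-smoothed check loss ℓ_h(u; τ) = ∫ ρ_τ(v) k_h(v − u) dv is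
finite everywhere and twice continuously differentiable, with
ℓ_h'(u; τ) = τ − K̄(−u/h) and ℓ_h''(u; τ) = h⁻¹ k(−u/h). -/
theorem stmt_9 (τ h : ℝ) (hτ : τ ∈ Set.Ioo (0:ℝ) 1) (hh : 0 < h)
    (k : ℝ → ℝ) (hkc : Continuous k) (hk : Integrable k)
    (hk1 : (∫ v, k v) = 1)
    (hk2 : Integrable (fun v => |v * k v|))
    (Kbar : ℝ → ℝ) (hKbar : ∀ u, Kbar u = ∫ v in Set.Iic u, k v)
    (ℓ : ℝ → ℝ)
    (hℓ : ∀ u, ℓ u = ∫ v, checkLoss τ v * ((1 / h) * k ((v - u) / h))) :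
    (∀ u, Integrable (fun v => checkLoss τ v * ((1 / h) * k ((v - u) / h)))) ∧
    ContDiff ℝ 2 ℓ ∧
    (∀ u, HasDerivAt ℓ (τ - Kbar (-u / h)) u) ∧
    (∀ u, HasDerivAt (fun u => τ - Kbar (-u / h)) ((1 / h) * k (-u / h)) u) := by
  have hc := checkLoss_cont τ hτ
  have hk2' : Integrable (fun v => v * k v) :=
    hk2.mono (by fun_prop) (Filter.Eventually.of_forall fun v => by simp)
  have hg : ∀ u, Integrable (fun w => checkLoss τ (u + h * w) * k w) := by
    intro u
    have hb : Integrable (fun w => |u| * |k w| + h * |w * k w|) :=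
      (hk.abs.const_mul _).add (hk2.const_mul _)
    refine hb.mono' (by fun_prop) (Filter.Eventually.of_forall fun w => ?_)
    have h1 : |checkLoss τ (u + h * w)| ≤ |u| + h * |w| := by
      have h2 := checkLoss_lip τ hτ (u + h * w) 0
      have h3 : checkLoss τ 0 = 0 := by simp [checkLoss]
      rw [h3, sub_zero, sub_zero] at h2
      have h4 := abs_add_le u (h * w)
      rw [abs_mul h, abs_of_pos hh] at h4
      linarith
    rw [Real.norm_eq_abs, abs_mul, abs_mul]
    nlinarith [mul_le_mul_of_nonneg_right h1 (abs_nonneg (k w))]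
  have hfg : ∀ u, (fun v => checkLoss τ v * ((1 / h) * k ((v - u) / h))) =
      fun v => (fun x => (1 / h) * (fun w => checkLoss τ (u + h * w) * k w) (x / h)) (v - u) := by
    intro u
    funext v
    have : u + h * ((v - u) / h) = v := by field_simp; ring
    simp only [this]
    ring
  have hint : ∀ u, Integrable (fun v => checkLoss τ v * ((1 / h) * k ((v - u) / h))) := by
    intro u
    rw [hfg u]
    exact (((hg u).comp_div hh.ne').const_mul (1 / h)).comp_sub_right u
  have hl : ℓ = fun u => ∫ w, checkLoss τ (u + h * w) * k w := by
    funext u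
    rw [hℓ, hfg u, integral_sub_right_eq_self
      (fun x => (1 / h) * (fun w => checkLoss τ (u + h * w) * k w) (x / h)) u,
      integral_const_mul, Measure.integral_comp_div (fun w => checkLoss τ (u + h * w) * k w) h, abs_of_pos hh, smul_eq_mul]
    field_simp
  have hd1 : ∀ u, HasDerivAt ℓ (τ - Kbar (-u / h)) u := by
    intro u
    have hI : Integrable (fun w => (Iio (-u / h)).indicator k w) := hk.indicator measurableSet_Iio
    have hF' : (fun w => (τ - if u + h * w < 0 then 1 else 0) * k w) =
        fun w => τ * k w - (Iio (-u / h)).indicator k w := by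
      funext w
      have : u + h * w < 0 ↔ w ∈ Iio (-u / h) := by
        rw [mem_Iio, lt_div_iff₀ hh]
        constructor <;> intro <;> linarith
      by_cases hw : w ∈ Iio (-u / h)
      · rw [if_pos (this.2 hw), indicator_of_mem hw]; ring
      · rw [if_neg (fun h => hw (this.1 h)), indicator_of_notMem hw]; ring
    have hv : (∫ w, (τ - if u + h * w < 0 then 1 else 0) * k w) = τ - Kbar (-u / h) := by
      rw [hF', integral_sub (hk.const_mul τ) hI, integral_const_mul, hk1,
        integral_indicator measurableSet_Iio, hKbar, integral_Iic_eq_integral_Iio, mul_one]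
    rw [hl, ← hv]
    refine (hasDerivAt_integral_of_dominated_loc_of_lip (bound := fun w => |k w|) (s := univ)
      Filter.univ_mem (Filter.Eventually.of_forall fun x => (hg x).aestronglyMeasurable) (hg u)
      ?_ ?_ hk.abs ?_).2
    · rw [hF']
      exact ((hk.const_mul τ).sub hI).aestronglyMeasurable
    · refine Filter.Eventually.of_forall fun w => ?_
      apply LipschitzOnWith.of_dist_le_mul
      intro x _ y _
      rw [Real.dist_eq, Real.dist_eq, ← sub_mul, abs_mul, mul_comm]
      have := checkLoss_lip τ hτ (x + h * w) (y + h * w)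
      rw [add_sub_add_right_eq_sub] at this
      simpa using mul_le_mul_of_nonneg_left this (abs_nonneg (k w))
    · have : ∀ᵐ w : ℝ, w ≠ -u / h := by
        simp [ae_iff]
      filter_upwards [this] with w hw
      have hne : u + h * w ≠ 0 := by
        intro h0
        apply hw
        field_simp
        linarith
      exact ((checkLoss_deriv τ _ hne).comp_add_const u (h * w)).mul_const (k w)
  have hK : ∀ x, HasDerivAt Kbar (k x) x := by
    intro x
    have e : Kbar = fun y => Kbar 0 + ∫ v in (0:ℝ)..y, k v := by
      funext y
      rw [← intervalIntegral.integral_Iic_sub_Iic hk.integrableOn hk.integrableOn, hKbar, hKbar]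
      ring
    rw [e]
    exact (hkc.integral_hasStrictDerivAt 0 x).hasDerivAt.const_add _
  have hd2 : ∀ u, HasDerivAt (fun u => τ - Kbar (-u / h)) ((1 / h) * k (-u / h)) u := by
    intro u
    have h1 : HasDerivAt (fun u : ℝ => -u / h) (-1 / h) u :=
      (hasDerivAt_id u).neg.div_const h
    have h2 := ((hK (-u / h)).comp u h1).const_sub τ
    have e : (1 / h) * k (-u / h) = -(k (-u / h) * (-1 / h)) := by ring
    rw [e]
    exact h2
  refine ⟨hint, ?_, hd1, hd2⟩
  have e1 : deriv ℓ = fun u => τ - Kbar (-u / h) := funext fun u => (hd1 u).deriv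
  have e2 : deriv (fun u => τ - Kbar (-u / h)) = fun u => (1 / h) * k (-u / h) :=
    funext fun u => (hd2 u).deriv
  rw [show (2 : WithTop ℕ∞) = 1 + 1 by norm_num, contDiff_succ_iff_deriv]
  refine ⟨fun u => (hd1 u).differentiableAt, by simp, ?_⟩
  rw [e1, contDiff_one_iff_deriv, e2]
  exact ⟨fun u => (hd2 u).differentiableAt, by fun_prop⟩
end
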